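/- arXiv:2107.03154 — 2 statements merged into one kernel-verified Lean document; each statement's English description precedes it below -/
import Mathlib

section
/- Let F = F(a, b) be the free group of rank 2. For every m ≥ 0 there exists a finitely generated subgroup H ≤ F whose dependence length is exactly m, i.e., the minimal k ≥ 0 with DepCl(H) = Dep^k(H) equals m. -/
open scoped Monoid.Coprod

variable {F : Type*}

/-- The canonical homomorphism `φ_g : H ∗ ⟨x⟩ → F` from the free product of `H` with an
infinite cyclic group (the free group on one generator `x`), restricting to the inclusion
`H ↪ F` and sending `x` to `g`. -/
noncomputable def phi [Group F] (H : Subgroup F) (g : F) :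
    (↥H ∗ FreeGroup Unit) →* F :=
  Monoid.Coprod.lift H.subtype (FreeGroup.lift fun _ => g)

/-- `g` depends on `H` (is algebraic over `H`) if `φ_g` is not injective. -/
def Depends [Group F] (H : Subgroup F) (g : F) : Prop :=
  ¬ Function.Injective (phi H g)

/-- `dep H`: the set of elements of `F` that depend on `H`. -/
def depSet [Group F] (H : Subgroup F) : Set F := {g | Depends H g}

/-- `Dep H`: the subgroup generated by the elements that depend on `H`. -/
noncomputable def DepSubgroup [Group F] (H : Subgroup F) : Subgroup F :=
  Subgroup.closure (depSet H)

/-- The rank of a subgroup: the minimal cardinality of a generating set. For subgroups of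
free groups this equals the cardinality of a free basis. -/
noncomputable def rk [Group F] (H : Subgroup F) : Cardinal :=
  ⨅ S : {S : Set F // Subgroup.closure S = H}, Cardinal.mk S.1

/-!
Let `φ` be the endomorphism `a ↦ a⁻¹ b a b⁻¹`, `b ↦ a` of `F`; the witness for `m` is `φᵐ(F)`.
Since `b` solves the equation `a⁻¹ x a x⁻¹ = φ(a)` over `φ(F)`, we have `Dep(φ(F)) = F`. If
conversely every element that depends on `φ²(F)` lies in `φ(F)`, then, as `φ` is injective,
transport along `φ` gives `Dep(φⁿ⁺¹(F)) = φⁿ(F)` for all `n`, while `φ(F) ≠ F`.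

If `g` depends on `H`, then `⟨H, g⟩` is a free group of rank at most that of `H`, because finitely
generated free groups are Hopfian. For `H = φ²(F)` this forces the exponent sum `k` of `b` in `g`
to be zero: otherwise a quadratic homomorphism to `ℤ ≀ ℤ` detects three independent directions in
the abelianization of `⟨H, g⟩`. For `k = 0` both `φ(F)` and `g` lie in the kernel of the exponent
sum of `b`, on which a coordinate of a homomorphism to `F ≀ ℤ` is a left inverse `r` of `φ`. As `r`
is injective on `φ(F)` and `r(⟨φ(F), g⟩)` is no larger than `r(φ(F))`, the Hopf property makes `r`
injective on `⟨φ(F), g⟩`, and `g = φ(r(g))`.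
-/

section Hopf

variable {G Q : Type*} [Group G] [Group Q]

theorem exists_perm_apply_eq_mul (S : Set G) [Finite S] (g : G) :
    ∃ σ : Equiv.Perm S, ∀ s : S, g * s ∈ S → (σ s : G) = g * s := by
  obtain ⟨σ, hσ⟩ := Equiv.Perm.exists_extending_pair
    (fun s : {s : S // g * s ∈ S} => s.1) (fun s => ⟨g * s.1, s.2⟩)
    Subtype.val_injective fun s t h => by simpa [Subtype.ext_iff] using h
  exact ⟨σ, fun s hs => congrArg Subtype.val (hσ ⟨s, hs⟩)⟩

theorem coe_lift_mk_apply {α : Type*} {S : Set (FreeGroup α)} {σ : α → Equiv.Perm S}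
    (hσ : ∀ x (s : S), FreeGroup.of x * ↑s ∈ S → (σ x s : FreeGroup α) = FreeGroup.of x * ↑s)
    {L : List (α × Bool)} (hL : ∀ l, l <:+ L → FreeGroup.mk l ∈ S) (h1 : 1 ∈ S) :
    (FreeGroup.lift σ (FreeGroup.mk L) ⟨1, h1⟩ : FreeGroup α) = FreeGroup.mk L := by
  induction L with
  | nil => simp [← FreeGroup.one_eq_mk]
  | cons l L ih =>
    obtain ⟨x, b⟩ := l
    have hmem : FreeGroup.mk ((x, b) :: L) ∈ S := hL _ List.suffix_rfl
    have ih' : FreeGroup.lift σ (FreeGroup.mk L) ⟨1, h1⟩ =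
        ⟨FreeGroup.mk L, hL _ (L.suffix_cons _)⟩ :=
      Subtype.ext (ih fun l hl => hL l (hl.trans (L.suffix_cons _)))
    cases b with
    | true =>
      have hcons : FreeGroup.mk ((x, true) :: L) = FreeGroup.of x * FreeGroup.mk L := rfl
      rw [hcons] at hmem ⊢
      rw [map_mul, Equiv.Perm.mul_apply, ih', FreeGroup.lift_apply_of, hσ x _ hmem]
    | false =>
      have hcons : FreeGroup.mk ((x, false) :: L) = (FreeGroup.of x)⁻¹ * FreeGroup.mk L := rfl
      rw [hcons] at hmem ⊢
      have hx : σ x ⟨_, hmem⟩ = ⟨FreeGroup.mk L, hL _ (L.suffix_cons _)⟩ := Subtype.ext <| by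
        rw [hσ x _ (by simpa using hL _ (L.suffix_cons _)), mul_inv_cancel_left]
      rw [map_mul, Equiv.Perm.mul_apply, ih', map_inv, FreeGroup.lift_apply_of,
        Equiv.Perm.inv_eq_iff_eq.2 hx.symm]

/- Left multiplication by a generator, where it stays in the finite set of suffixes of the reduced
word of `w`, extends to a permutation of that set; the permutations so obtained carry `1` to `w`. -/
instance residuallyFinite_freeGroup (α : Type*) : Group.ResiduallyFinite (FreeGroup α) := by
  classical
  refine Group.residuallyFinite_of_forall_exists_finite_monoidHom fun w hw => ?_
  let S : Set (FreeGroup α) := FreeGroup.mk '' {l | l <:+ w.toWord}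
  have hS : S.Finite := by
    have : {l | l <:+ w.toWord} = {l | l ∈ w.toWord.tails} := by ext l; simp
    exact .image _ (this ▸ w.toWord.tails.finite_toSet)
  have : Finite S := hS
  choose σ hσ using exists_perm_apply_eq_mul S
  refine ⟨Equiv.Perm S, inferInstance, inferInstance, FreeGroup.lift fun x => σ (.of x), ?_⟩
  intro h
  have := coe_lift_mk_apply (L := w.toWord) (fun x => hσ (.of x))
    (fun l hl => ⟨l, hl, rfl⟩) ⟨[], List.nil_suffix, rfl⟩
  rw [FreeGroup.mk_toWord, h] at this
  exact hw this.symm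

theorem finite_monoidHom_of_fg [Group.FG G] [Finite Q] : Finite (G →* Q) := by
  obtain ⟨α, _, π, hπ⟩ := Group.fg_iff_exists_freeGroup_hom_surjective_finite.1 ‹Group.FG G›
  have : Finite (FreeGroup α →* Q) := .of_equiv _ FreeGroup.lift
  exact .of_injective (fun f : G →* Q => f.comp π) fun _ _ => (MonoidHom.cancel_right hπ).1

/-- Malcev: precomposition with `f` permutes the finitely many homomorphisms from `G` to a given
finite quotient, so an element of the kernel of `f` is killed in every finite quotient. -/
theorem injective_of_surjective_of_residuallyFinite [Group.FG G] [Group.ResiduallyFinite G]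
    {f : G →* G} (hf : Function.Surjective f) : Function.Injective f := by
  rw [injective_iff_map_eq_one]
  intro g hg
  by_contra hne
  obtain ⟨N, hN⟩ := Group.exists_finiteIndexNormalSubgroup_notMem g hne
  let π : G →* G ⧸ N.toSubgroup := QuotientGroup.mk' N.toSubgroup
  have : Finite (G →* G ⧸ N.toSubgroup) := finite_monoidHom_of_fg
  have hinj : Function.Injective fun h : G →* G ⧸ N.toSubgroup => h.comp f :=
    fun _ _ => (MonoidHom.cancel_right hf).1
  obtain ⟨h, hh : h.comp f = π⟩ := Finite.surjective_of_injective hinj π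
  have : π g = 1 := by rw [← hh, MonoidHom.comp_apply, hg, map_one]
  exact hN ((QuotientGroup.eq_one_iff g).1 this)

end Hopf

section Rank

variable {G Q A : Type*} [Group G] [Group Q] [AddCommGroup A]

open Cardinal in
theorem mk_le_rank_of_linearIndependent [Group.FG G] {ι : Type*} (f : G →* Multiplicative A)
    (v : ι → G) (hv : LinearIndependent ℤ fun i => (f (v i)).toAdd) : #ι ≤ Group.rank G := by
  classical
  obtain ⟨S, hcard, hS⟩ := Group.rank_spec G
  let T : Finset A := S.image fun s => (f s).toAdd
  have hspan (g : G) : (f g).toAdd ∈ Submodule.span ℤ (T : Set A) := by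
    have hg : g ∈ Subgroup.closure (S : Set G) := hS ▸ Subgroup.mem_top g
    induction hg using Subgroup.closure_induction with
    | mem s hs => exact Submodule.subset_span (by simpa [T] using ⟨s, hs, rfl⟩)
    | one => simp
    | mul x y _ _ hx hy => simpa using Submodule.add_mem _ hx hy
    | inv x _ hx => simpa using hx
  calc #ι ≤ Fintype.card (T : Set A) :=
        linearIndependent_le_span' _ hv T (by rintro _ ⟨i, rfl⟩; exact hspan _)
    _ ≤ Group.rank G := by
        rw [← hcard]; exact_mod_cast (Fintype.card_coe T).trans_le Finset.card_image_le

theorem card_le_rank_of_det_ne_zero [Group.FG G] {ι : Type*} [Fintype ι] [DecidableEq ι]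
    (f : ι → G →* Multiplicative ℤ) (v : ι → G)
    (h : (Matrix.of fun i j => (f j (v i)).toAdd).det ≠ 0) : Fintype.card ι ≤ Group.rank G := by
  let fPi : G →* Multiplicative (ι → ℤ) :=
    { toFun g := .ofAdd fun j => (f j g).toAdd
      map_one' := by ext; simp
      map_mul' x y := by ext; simp }
  have := mk_le_rank_of_linearIndependent fPi v (Matrix.linearIndependent_rows_of_det_ne_zero h)
  simpa using this

theorem mk_le_rank_freeGroup (α : Type*) [Group.FG (FreeGroup α)] :
    Cardinal.mk α ≤ Group.rank (FreeGroup α) := by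
  classical
  refine mk_le_rank_of_linearIndependent
    (FreeGroup.lift fun x => Multiplicative.ofAdd (Finsupp.single x (1 : ℤ))) FreeGroup.of ?_
  simpa using Finsupp.linearIndependent_single_one ℤ α

theorem finite_generators [IsFreeGroup G] [Group.FG G] : Finite (IsFreeGroup.Generators G) := by
  let e := IsFreeGroup.toFreeGroup G
  have : Group.FG (FreeGroup (IsFreeGroup.Generators G)) :=
    Group.fg_of_surjective (f := e.toMonoidHom) e.surjective
  exact Cardinal.lt_aleph0_iff_finite.1
    ((mk_le_rank_freeGroup _).trans_lt Cardinal.natCast_lt_aleph0)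

theorem rank_freeGroup_le (α : Type*) [Finite α] : Group.rank (FreeGroup α) ≤ Nat.card α := by
  classical
  have := Fintype.ofFinite α
  calc Group.rank (FreeGroup α) ≤ (Finset.univ.image (FreeGroup.of (α := α))).card :=
        Group.rank_le (by simp)
    _ ≤ Nat.card α := by simpa using Finset.card_image_le (s := .univ) (f := FreeGroup.of)

theorem injective_of_surjective_of_rank_le [Group.FG G] [IsFreeGroup Q] [Group.FG Q] {f : G →* Q}
    (hf : Function.Surjective f) (hrank : Group.rank G ≤ Group.rank Q) :
    Function.Injective f := by
  let Y := IsFreeGroup.Generators Q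
  let e : Q ≃* FreeGroup Y := IsFreeGroup.toFreeGroup Q
  have : Finite Y := finite_generators
  obtain ⟨S, hcard, hS⟩ := Group.rank_spec G
  obtain ⟨i⟩ : Nonempty (S ↪ Y) := by
    have := Fintype.ofFinite Y
    refine Function.Embedding.nonempty_of_card_le ?_
    calc Fintype.card S = Group.rank G := by rw [Fintype.card_coe, hcard]
      _ ≤ Group.rank (FreeGroup Y) := hrank.trans_eq (Group.rank_congr e)
      _ ≤ Fintype.card Y := Nat.card_eq_fintype_card (α := Y) ▸ rank_freeGroup_le Y
  let π : FreeGroup Y →* G := FreeGroup.lift (Function.extend i (fun s => s) 1)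
  have hπ : Function.Surjective π := by
    rw [FreeGroup.lift_surjective_iff_closure_range_eq_top, eq_top_iff, ← hS]
    exact Subgroup.closure_mono fun s hs => ⟨i ⟨s, hs⟩, i.injective.extend_apply _ _ ⟨s, hs⟩⟩
  have hinj : Function.Injective ((e.toMonoidHom.comp f).comp π) :=
    injective_of_surjective_of_residuallyFinite ((e.surjective.comp hf).comp hπ)
  exact .of_comp (f := e) (.of_comp_right hinj hπ)

end Rank

section Coprod

variable {G H : Type*} [Group G] [Group H]

open Monoid.Coprod in
theorem closure_inl_image_union_inr_image {S : Set G} {T : Set H} (hS : Subgroup.closure S = ⊤)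
    (hT : Subgroup.closure T = ⊤) :
    Subgroup.closure (inl '' S ∪ inr '' T : Set (G ∗ H)) = ⊤ := by
  rw [Subgroup.closure_union, ← MonoidHom.map_closure, ← MonoidHom.map_closure, hS, hT,
    ← MonoidHom.range_eq_map, ← MonoidHom.range_eq_map, range_inl_sup_range_inr]

instance fg_coprod [Group.FG G] [Group.FG H] : Group.FG (G ∗ H) := by
  obtain ⟨S, hS, hS'⟩ := Group.fg_iff.1 ‹Group.FG G›
  obtain ⟨T, hT, hT'⟩ := Group.fg_iff.1 ‹Group.FG H›
  exact Group.fg_iff.2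
    ⟨_, closure_inl_image_union_inr_image hS hT, (hS'.image _).union (hT'.image _)⟩

theorem rank_coprod_le [Group.FG G] [Group.FG H] :
    Group.rank (G ∗ H) ≤ Group.rank G + Group.rank H := by
  classical
  obtain ⟨S, hScard, hS⟩ := Group.rank_spec G
  obtain ⟨T, hTcard, hT⟩ := Group.rank_spec H
  have hST : Subgroup.closure ((S.image Monoid.Coprod.inl ∪ T.image Monoid.Coprod.inr :
      Finset (G ∗ H)) : Set (G ∗ H)) = ⊤ := by
    simpa using closure_inl_image_union_inr_image hS hT
  calc Group.rank (G ∗ H) ≤ _ := Group.rank_le hST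
    _ ≤ _ := Finset.card_union_le _ _
    _ ≤ Group.rank G + Group.rank H :=
      hScard ▸ hTcard ▸ add_le_add Finset.card_image_le Finset.card_image_le

open Monoid.Coprod in
/-- The free group on a disjoint union as a free product of free groups. -/
def freeGroupSumEquiv (α β : Type*) : FreeGroup (α ⊕ β) ≃* FreeGroup α ∗ FreeGroup β :=
  MonoidHom.toMulEquiv
    (FreeGroup.lift (Sum.elim (fun a => inl (.of a)) fun b => inr (.of b)))
    (lift (FreeGroup.map .inl) (FreeGroup.map .inr))
    (by ext (a | b) <;> simp) (by ext <;> simp)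

instance isFreeGroup_coprod [IsFreeGroup G] [IsFreeGroup H] : IsFreeGroup (G ∗ H) :=
  FreeGroupBasis.isFreeGroup <| (FreeGroupBasis.ofFreeGroup _).map <|
    (freeGroupSumEquiv _ _).trans <|
      MulEquiv.coprodCongr (IsFreeGroup.toFreeGroup G).symm (IsFreeGroup.toFreeGroup H).symm

end Coprod

section Dependence

open Monoid.Coprod

variable {G P : Type*} [Group G] [Group P]

theorem phi_inl (H : Subgroup G) (g : G) (h : H) : phi H g (inl h) = h := by
  simp [phi]

theorem phi_inr_of (H : Subgroup G) (g : G) (x : Unit) : phi H g (inr (.of x)) = g := by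
  simp [phi]

theorem le_range_phi (H : Subgroup G) (g : G) : H ≤ (phi H g).range :=
  fun h hh => ⟨inl ⟨h, hh⟩, phi_inl H g _⟩

theorem mem_range_phi (H : Subgroup G) (g : G) : g ∈ (phi H g).range :=
  ⟨inr (.of ()), phi_inr_of H g ()⟩

theorem range_phi_le {H L : Subgroup G} {g : G} (hH : H ≤ L) (hg : g ∈ L) :
    (phi H g).range ≤ L := by
  rw [phi, range_lift, Subgroup.range_subtype, sup_le_iff]
  exact ⟨hH, FreeGroup.range_lift_le (by rintro _ ⟨_, rfl⟩; exact hg)⟩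

theorem depends_of_mem {H : Subgroup G} {h : G} (hh : h ∈ H) : Depends H h := by
  intro hinj
  have heq : (inl ⟨h, hh⟩ : H ∗ FreeGroup Unit) = inr (.of ()) :=
    hinj (by rw [phi_inl, phi_inr_of])
  simpa using congrArg snd heq

theorem le_DepSubgroup (H : Subgroup G) : H ≤ DepSubgroup H :=
  fun _ hh => Subgroup.subset_closure (depends_of_mem hh)

theorem depends_map_iff {f : G →* P} (hf : Function.Injective f) (H : Subgroup G) (g : G) :
    Depends (H.map f) (f g) ↔ Depends H g := by
  let e := MulEquiv.coprodCongr (H.equivMapOfInjective f hf) (MulEquiv.refl (FreeGroup Unit))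
  have hcomp : (phi (H.map f) (f g)).comp e.toMonoidHom = f.comp (phi H g) := by
    ext <;> simp [e, phi]
  have hinj : Function.Injective (phi (H.map f) (f g)) ↔ Function.Injective (phi H g) := by
    rw [← Function.Injective.of_comp_iff hf, ← MonoidHom.coe_comp, ← hcomp]
    exact (Function.Injective.of_comp_iff' _ e.bijective).symm
  exact not_congr hinj

theorem DepSubgroup_map {f : G →* P} (hf : Function.Injective f) (H : Subgroup G)
    (h : depSet (H.map f) ⊆ f.range) : DepSubgroup (H.map f) = (DepSubgroup H).map f := by
  have hdep : depSet (H.map f) = f '' depSet H := by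
    refine Set.Subset.antisymm (fun y hy => ?_) ?_
    · obtain ⟨g, rfl⟩ := h hy
      exact ⟨g, (depends_map_iff hf H g).1 hy, rfl⟩
    · rintro _ ⟨g, hg, rfl⟩
      exact (depends_map_iff hf H g).2 hg
  rw [DepSubgroup, DepSubgroup, hdep, MonoidHom.map_closure]

theorem Depends.rank_range_phi_le [IsFreeGroup G] {H : Subgroup G} [Group.FG H] {g : G}
    (h : Depends H g) : Group.rank (phi H g).range ≤ Group.rank H := by
  have hlt : Group.rank (phi H g).range < Group.rank (H ∗ FreeGroup Unit) := by
    by_contra! hle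
    refine h (MonoidHom.rangeRestrict_injective_iff.1 ?_)
    exact injective_of_surjective_of_rank_le (phi H g).rangeRestrict_surjective hle
  have hle : Group.rank (H ∗ FreeGroup Unit) ≤ Group.rank H + 1 :=
    rank_coprod_le.trans (by simpa using rank_freeGroup_le Unit)
  lia

theorem Depends.eq_of_map_eq [IsFreeGroup G] {H L : Subgroup G} [Group.FG H] (hHL : H ≤ L)
    {r : L →* P} (hr : Function.Injective (r.comp (Subgroup.inclusion hHL))) {g h : L}
    (hh : (h : G) ∈ H) (hgh : r g = r h) (hdep : Depends H (g : G)) : g = h := by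
  let K := (phi H (g : G)).range
  let rH : H →* P := r.comp (Subgroup.inclusion hHL)
  have hKL : K ≤ L := range_phi_le hHL g.2
  have hK : K ≤ (rH.range.comap r).map L.subtype :=
    range_phi_le (fun x hx => ⟨⟨x, hHL hx⟩, ⟨⟨x, hx⟩, rfl⟩, rfl⟩)
      ⟨g, ⟨⟨h, hh⟩, hgh.symm⟩, rfl⟩
  have hrange (k : K) : r (Subgroup.inclusion hKL k) ∈ rH.range := by
    obtain ⟨l, hl, hlk⟩ := hK k.2
    rwa [show Subgroup.inclusion hKL k = l from Subtype.ext hlk.symm]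
  let s : K →* H := (MonoidHom.ofInjective hr).symm.toMonoidHom.comp
    ((r.comp (Subgroup.inclusion hKL)).codRestrict rH.range hrange)
  have hs (k : K) : rH (s k) = r (Subgroup.inclusion hKL k) :=
    congrArg Subtype.val ((MonoidHom.ofInjective hr).apply_symm_apply ⟨_, hrange k⟩)
  have hs_surj : Function.Surjective s := fun x => ⟨⟨x, le_range_phi H _ x.2⟩, hr (hs _)⟩
  -- `⟨H, g⟩` needs no more generators than `H`, so it is too small for `s` to have a kernel.
  have hs_inj : Function.Injective s :=
    injective_of_surjective_of_rank_le hs_surj hdep.rank_range_phi_le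
  have heq : (⟨g, mem_range_phi H _⟩ : K) = ⟨h, le_range_phi H _ hh⟩ :=
    hs_inj (hr ((hs _).trans (.trans hgh (hs ⟨h, le_range_phi H _ hh⟩).symm)))
  exact Subtype.ext (congrArg K.subtype heq)

/- If `φ_g` were injective over `K`, then `g` could be replaced by the generator `x` of `K ∗ ⟨x⟩`;
killing `x` retracts `K ∗ ⟨x⟩` onto `K` and is injective on `H`, so `x` would be trivial. -/
theorem Depends.mono [IsFreeGroup G] {H K : Subgroup G} [Group.FG H] (hHK : H ≤ K) {g : G}
    (h : Depends H g) : Depends K g := by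
  intro hinj
  let ι : H →* K ∗ FreeGroup Unit := inl.comp (Subgroup.inclusion hHK)
  have hmap : ι.range.map (phi K g) = H := by
    rw [MonoidHom.map_range, show (phi K g).comp ι = H.subtype from rfl, Subgroup.range_subtype]
  have hx : Depends ι.range (inr (.of ())) := by
    rwa [← depends_map_iff hinj, hmap, phi_inr_of]
  let r : (⊤ : Subgroup (K ∗ FreeGroup Unit)) →* K := fst.comp (Subgroup.subtype ⊤)
  have hr : Function.Injective (r.comp (Subgroup.inclusion (le_top : ι.range ≤ ⊤))) := by
    rintro ⟨_, x, rfl⟩ ⟨_, y, rfl⟩ hxy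
    exact Subtype.ext (congrArg inl hxy)
  have hone : (⟨inr (.of ()), trivial⟩ : (⊤ : Subgroup (K ∗ FreeGroup Unit))) = 1 :=
    hx.eq_of_map_eq le_top hr (one_mem _) (by simp [r])
  simpa using congrArg (fun z => snd z.1) hone

end Dependence

section Iterate

variable {G : Type*} [Group G] {φ : G →* G}

theorem map_iterate_succ_top_le_range (φ : G →* G) (n : ℕ) :
    (Subgroup.map φ)^[n + 1] ⊤ ≤ φ.range := by
  rw [Function.iterate_succ_apply']
  exact Subgroup.map_le_range φ _

theorem fg_map_iterate_top [Group.FG G] (φ : G →* G) (n : ℕ) : ((Subgroup.map φ)^[n] ⊤).FG := by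
  classical
  induction n with
  | zero => exact Group.fg_def.1 ‹_›
  | succ n ih =>
    obtain ⟨S, hS⟩ := ih
    exact ⟨S.image φ, by
      rw [Function.iterate_succ_apply', ← hS, MonoidHom.map_closure, Finset.coe_image]⟩

theorem DepSubgroup_map_iterate_succ [IsFreeGroup G] [Group.FG G] (hφ : Function.Injective φ)
    (htop : DepSubgroup φ.range = ⊤) (hdep : depSet (φ.comp φ).range ⊆ φ.range) (n : ℕ) :
    DepSubgroup ((Subgroup.map φ)^[n + 1] ⊤) = (Subgroup.map φ)^[n] ⊤ := by
  induction n with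
  | zero => simpa [← MonoidHom.range_eq_map] using htop
  | succ n ih =>
    have hle : (Subgroup.map φ)^[n + 2] ⊤ ≤ (φ.comp φ).range := by
      rw [Function.iterate_succ_apply', MonoidHom.range_comp]
      exact Subgroup.map_mono (map_iterate_succ_top_le_range φ n)
    have : Group.FG ((Subgroup.map φ)^[n + 2] ⊤ : Subgroup G) :=
      (Group.fg_iff_subgroup_fg _).2 (fg_map_iterate_top φ _)
    have hrange : depSet ((Subgroup.map φ)^[n + 2] ⊤) ⊆ φ.range :=
      Set.Subset.trans (fun _ => Depends.mono hle) hdep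
    rw [Function.iterate_succ_apply'] at hrange
    rw [Function.iterate_succ_apply', DepSubgroup_map hφ _ hrange, ih,
      Function.iterate_succ_apply']

theorem DepSubgroup_iterate_map_iterate_add [IsFreeGroup G] [Group.FG G]
    (hφ : Function.Injective φ) (htop : DepSubgroup φ.range = ⊤)
    (hdep : depSet (φ.comp φ).range ⊆ φ.range) (n k : ℕ) :
    DepSubgroup^[k] ((Subgroup.map φ)^[n + k] ⊤) = (Subgroup.map φ)^[n] ⊤ := by
  induction k with
  | zero => rfl
  | succ k ih =>
    rw [Function.iterate_succ_apply, ← add_assoc, DepSubgroup_map_iterate_succ hφ htop hdep, ih]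

end Iterate

section RankTwo

open FreeGroup RegularWreathProduct

/-- The endomorphism `a ↦ a⁻¹ b a b⁻¹`, `b ↦ a` of the free group on `a = of 0` and `b = of 1`,
whose iterates have the subgroups of the theorem as ranges. -/
def commutatorEnd : FreeGroup (Fin 2) →* FreeGroup (Fin 2) :=
  lift ![(of 0)⁻¹ * of 1 * of 0 * (of 1)⁻¹, of 0]

/-- The exponent sum of the generator `i`, with values in `ℤ` written multiplicatively. -/
def expSum {α : Type*} [DecidableEq α] (i : α) : FreeGroup α →* Multiplicative ℤ :=
  lift fun j => .ofAdd (if j = i then 1 else 0)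

/-- The coordinate at `q` of a homomorphism `ρ` to a wreath product, as a homomorphism on the
subgroup that `ρ` maps into the base group. -/
def wreathKerEval {G D Q : Type*} [Group G] [Group D] [Group Q]
    (ρ : G →* D ≀ᵣ Q) (q : Q) :
    (rightHom.comp ρ).ker →* D where
  toFun g := (ρ g).left q
  map_one' := by simp
  map_mul' g h := by
    have hg : (ρ g).right = 1 := g.2
    simp [hg]

theorem commutatorEnd_of_zero : commutatorEnd (of 0) = (of 0)⁻¹ * of 1 * of 0 * (of 1)⁻¹ := by
  simp [commutatorEnd]

theorem commutatorEnd_of_one : commutatorEnd (of 1) = of 0 := by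
  simp [commutatorEnd]

theorem expSum_zero_commutatorEnd (w : FreeGroup (Fin 2)) :
    expSum 0 (commutatorEnd w) = expSum 1 w := by
  have h : (expSum 0).comp commutatorEnd = expSum 1 := by
    ext i
    fin_cases i <;> simp [expSum, commutatorEnd]
  exact DFunLike.congr_fun h w

theorem expSum_one_commutatorEnd (w : FreeGroup (Fin 2)) : expSum 1 (commutatorEnd w) = 1 := by
  have h : (expSum 1).comp commutatorEnd = 1 := by
    ext i
    fin_cases i <;> simp [expSum, commutatorEnd]
  exact DFunLike.congr_fun h w

theorem range_commutatorEnd_le_ker_expSum : commutatorEnd.range ≤ (expSum 1).ker := by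
  rintro _ ⟨w, rfl⟩
  exact expSum_one_commutatorEnd w

/-- A homomorphism to `FreeGroup (Fin 2) ≀ᵣ ℤ` under which `b` shifts the coordinates and `a` lies
in the base group. The coordinates of `a` are chosen so that those of `a⁻¹ b a b⁻¹` and `a` at `1`
are `a` and `b`, which makes the coordinate at `1` a left inverse of `commutatorEnd`. -/
def wreathHom : FreeGroup (Fin 2) →* FreeGroup (Fin 2) ≀ᵣ Multiplicative ℤ :=
  lift ![⟨fun k => if k = 1 then of 1 else of 1 * of 0, 1⟩, .inl (.ofAdd 1)]

theorem rightHom_comp_wreathHom :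
    rightHom.comp wreathHom = expSum 1 := by
  ext i
  fin_cases i <;> simp [wreathHom, expSum]

theorem wreathHom_commutatorEnd_left (w : FreeGroup (Fin 2)) :
    (wreathHom (commutatorEnd w)).left 1 = w := by
  have hker : commutatorEnd.range ≤ (rightHom.comp wreathHom).ker :=
    rightHom_comp_wreathHom ▸ range_commutatorEnd_le_ker_expSum
  have h : (wreathKerEval wreathHom 1).comp
      ((Subgroup.inclusion hker).comp commutatorEnd.rangeRestrict) = .id _ := by
    ext i
    change (wreathHom (commutatorEnd (of i))).left 1 = of i
    fin_cases i <;> simp [wreathHom, commutatorEnd]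
  exact DFunLike.congr_fun h w

theorem commutatorEnd_injective : Function.Injective commutatorEnd :=
  Function.LeftInverse.injective (g := fun w => (wreathHom w).left 1)
    wreathHom_commutatorEnd_left

theorem mem_range_commutatorEnd_of_depends {g : FreeGroup (Fin 2)} (hg : expSum 1 g = 1)
    (h : Depends commutatorEnd.range g) : g ∈ commutatorEnd.range := by
  have hker : commutatorEnd.range ≤ (rightHom.comp wreathHom).ker :=
    rightHom_comp_wreathHom ▸ range_commutatorEnd_le_ker_expSum
  have hgker : g ∈ (rightHom.comp wreathHom).ker :=
    rightHom_comp_wreathHom ▸ hg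
  let r := wreathKerEval wreathHom 1
  have hinj : Function.Injective (r.comp (Subgroup.inclusion hker)) := by
    rintro ⟨_, x, rfl⟩ ⟨_, y, rfl⟩ hxy
    have : x = y := by
      simpa [r, wreathKerEval, wreathHom_commutatorEnd_left] using hxy
    rw [this]
  have hh : commutatorEnd (r ⟨g, hgker⟩) ∈ commutatorEnd.range := ⟨_, rfl⟩
  have heq : (⟨g, hgker⟩ : (rightHom.comp wreathHom).ker) = ⟨_, hker hh⟩ :=
    h.eq_of_map_eq hker hinj hh (wreathHom_commutatorEnd_left _).symm
  rwa [show g = commutatorEnd (r ⟨g, hgker⟩) from Subtype.ext_iff.1 heq]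

/-- The homomorphism to `ℤ ≀ᵣ ℤ` under which `a` translates by `k`, and `b` translates by `-j` and
has `n ↦ n²` as its function in the base group. With `j` and `k` the exponent sums of `a` and `b`
in `g`, it maps `g` into the base group, while commutators with `a` become differences of step
`k`. -/
def quadraticWreathHom (j k : ℤ) :
    FreeGroup (Fin 2) →* Multiplicative ℤ ≀ᵣ Multiplicative ℤ :=
  lift ![.inl (.ofAdd k), ⟨fun n => .ofAdd (n.toAdd ^ 2), .ofAdd (-j)⟩]

theorem quadraticWreathHom_right (j k : ℤ) (g : FreeGroup (Fin 2)) :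
    (quadraticWreathHom j k g).right = expSum 0 g ^ k / expSum 1 g ^ j := by
  have h : rightHom.comp (quadraticWreathHom j k) =
      (zpowGroupHom k).comp (expSum 0) / (zpowGroupHom j).comp (expSum 1) := by
    ext i
    fin_cases i <;> simp [quadraticWreathHom, expSum]
  simpa using DFunLike.congr_fun h g

theorem quadraticWreathHom_commutatorEnd_of_zero_left (j k : ℤ) (n : Multiplicative ℤ) :
    ((quadraticWreathHom j k (commutatorEnd (of 0))).left n).toAdd = 2 * k * n.toAdd + k ^ 2 :=
  calc
    _ = (k + n.toAdd) ^ 2 - n.toAdd ^ 2 := by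
      simp [quadraticWreathHom, commutatorEnd, sub_eq_add_neg]
    _ = _ := by ring

theorem quadraticWreathHom_commutatorEnd_commutatorEnd_of_zero_left (j k : ℤ)
    (n : Multiplicative ℤ) :
    ((quadraticWreathHom j k (commutatorEnd (commutatorEnd (of 0)))).left n).toAdd =
      -2 * k ^ 2 :=
  calc
    _ = n.toAdd ^ 2 - (-j + (k + (j + n.toAdd))) ^ 2 + (n.toAdd ^ 2 - (-k + n.toAdd) ^ 2) := by
      simp [quadraticWreathHom, commutatorEnd, sub_eq_add_neg]
    _ = _ := by ring

theorem range_phi_le_ker_quadraticWreathHom (g : FreeGroup (Fin 2)) :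
    (phi (commutatorEnd.comp commutatorEnd).range g).range ≤
      (rightHom.comp (quadraticWreathHom (expSum 0 g).toAdd (expSum 1 g).toAdd)).ker := by
  refine range_phi_le ?_ ?_
  · rintro _ ⟨w, rfl⟩
    simp [MonoidHom.mem_ker, quadraticWreathHom_right, expSum_zero_commutatorEnd,
      expSum_one_commutatorEnd]
  · apply Multiplicative.toAdd.injective
    simp [quadraticWreathHom_right, mul_comm]

/- With `k` the exponent sum of `b` in `g`, the coordinates at `0` and `1` of `quadraticWreathHom`
together with `expSum 1` separate `φ²(b)`, `φ²(a)` and `g`: the first difference of `n²` depends on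
`n`, while the second is the nonzero constant `-2 k²`. -/
theorem three_le_rank_range_phi {g : FreeGroup (Fin 2)} (hg : expSum 1 g ≠ 1) :
    3 ≤ Group.rank (phi (commutatorEnd.comp commutatorEnd).range g).range := by
  let k := (expSum 1 g).toAdd
  let ρ := quadraticWreathHom (expSum 0 g).toAdd k
  let K := (phi (commutatorEnd.comp commutatorEnd).range g).range
  let e (n : Multiplicative ℤ) : K →* Multiplicative ℤ :=
    (wreathKerEval ρ n).comp (Subgroup.inclusion (range_phi_le_ker_quadraticWreathHom g))
  let f : Fin 3 → K →* Multiplicative ℤ := ![e 1, e (.ofAdd 1), (expSum 1).comp K.subtype]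
  let v : Fin 3 → K :=
    ![⟨commutatorEnd (commutatorEnd (of 1)), le_range_phi _ g ⟨of 1, rfl⟩⟩,
      ⟨commutatorEnd (commutatorEnd (of 0)), le_range_phi _ g ⟨of 0, rfl⟩⟩,
      ⟨g, mem_range_phi _ g⟩]
  have he (n : Multiplicative ℤ) (x : K) : e n x = (ρ x).left n := rfl
  have hmatrix : (Matrix.of fun i j => (f j (v i)).toAdd) =
      !![k ^ 2, 2 * k + k ^ 2, 0;
        -2 * k ^ 2, -2 * k ^ 2, 0;
        ((ρ g).left 1).toAdd, ((ρ g).left (.ofAdd 1)).toAdd, k] := by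
    ext i j
    fin_cases i <;> fin_cases j <;>
      simp [f, v, he, ρ, k, expSum_one_commutatorEnd, commutatorEnd_of_one,
        quadraticWreathHom_commutatorEnd_of_zero_left,
        quadraticWreathHom_commutatorEnd_commutatorEnd_of_zero_left]
  have hdet : (Matrix.of fun i j => (f j (v i)).toAdd).det = 4 * k ^ 4 :=
    calc
      _ = -(k ^ 2 * (2 * k ^ 2) * k) + (2 * k + k ^ 2) * (2 * k ^ 2) * k := by
        simp [hmatrix, Matrix.det_fin_three]
      _ = _ := by ring
  have hk : k ≠ 0 := fun h => hg (Multiplicative.toAdd.injective h)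
  simpa using card_le_rank_of_det_ne_zero f v (by simp [hdet, hk])

theorem expSum_eq_one_of_depends {g : FreeGroup (Fin 2)}
    (h : Depends (commutatorEnd.comp commutatorEnd).range g) : expSum 1 g = 1 := by
  by_contra hg
  have hrank : Group.rank (phi (commutatorEnd.comp commutatorEnd).range g).range ≤ 2 :=
    h.rank_range_phi_le.trans <| Group.rank_range_le.trans <| by
      simpa using rank_freeGroup_le (Fin 2)
  have := three_le_rank_range_phi hg
  lia

theorem depSet_range_commutatorEnd_comp_subset :
    depSet (commutatorEnd.comp commutatorEnd).range ⊆ commutatorEnd.range := fun _ hg =>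
  mem_range_commutatorEnd_of_depends (expSum_eq_one_of_depends hg) <|
    hg.mono <| (MonoidHom.range_comp _ _).trans_le (Subgroup.map_le_range _ _)

theorem range_commutatorEnd_ne_top : commutatorEnd.range ≠ ⊤ := fun h => by
  have hb : expSum 1 (of (1 : Fin 2)) = 1 :=
    range_commutatorEnd_le_ker_expSum (h ▸ Subgroup.mem_top _)
  exact absurd hb (by decide)

theorem DepSubgroup_range_commutatorEnd : DepSubgroup commutatorEnd.range = ⊤ := by
  set K := commutatorEnd.range
  have ha : of 0 ∈ K := ⟨of 1, commutatorEnd_of_one⟩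
  have hc : (of 0)⁻¹ * of 1 * of 0 * (of 1)⁻¹ ∈ K := ⟨of 0, commutatorEnd_of_zero⟩
  have hb : Depends K (of 1) := by
    -- `b` solves the equation `a⁻¹ x a x⁻¹ = a⁻¹ b a b⁻¹` over `K`.
    intro hinj
    let a : K ∗ FreeGroup Unit := Monoid.Coprod.inl ⟨_, ha⟩
    let x : K ∗ FreeGroup Unit := Monoid.Coprod.inr (of ())
    have heq : a⁻¹ * x * a * x⁻¹ = Monoid.Coprod.inl ⟨_, hc⟩ := hinj (by simp [phi, a, x])
    have hone : (1 : K) = ⟨_, hc⟩ := by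
      simpa [a, x] using congrArg Monoid.Coprod.fst heq
    have hne : (1 : FreeGroup (Fin 2)) ≠ (of 0)⁻¹ * of 1 * of 0 * (of 1)⁻¹ := by decide
    exact hne (congrArg K.subtype hone)
  rw [eq_top_iff, ← closure_range_of, Subgroup.closure_le]
  rintro _ ⟨i, rfl⟩
  fin_cases i
  exacts [le_DepSubgroup K ha, Subgroup.subset_closure hb]

end RankTwo

/-- in the free group of rank 2, for every `m ≥ 0` there is a finitely
generated subgroup `H` whose dependence length is exactly `m`: `m` is the minimal `k`
with `DepCl H = Dep^k H`. -/
theorem exists_subgroup_dependence_length (m : ℕ) :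
    ∃ H : Subgroup (FreeGroup (Fin 2)), H.FG ∧
      (⨆ i, DepSubgroup^[i] H) = DepSubgroup^[m] H ∧
      ∀ k < m, (⨆ i, DepSubgroup^[i] H) ≠ DepSubgroup^[k] H := by
  let H : ℕ → Subgroup (FreeGroup (Fin 2)) := fun n => (Subgroup.map commutatorEnd)^[n] ⊤
  have hiter (n k : ℕ) : DepSubgroup^[k] (H (n + k)) = H n :=
    DepSubgroup_iterate_map_iterate_add commutatorEnd_injective DepSubgroup_range_commutatorEnd
      depSet_range_commutatorEnd_comp_subset n k
  have hm : DepSubgroup^[m] (H m) = ⊤ := by simpa [H] using hiter 0 m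
  have hsup : ⨆ i, DepSubgroup^[i] (H m) = ⊤ :=
    eq_top_iff.2 (hm ▸ le_iSup (fun i => DepSubgroup^[i] (H m)) m)
  refine ⟨H m, fg_map_iterate_top _ m, hsup.trans hm.symm, fun k hk h => ?_⟩
  obtain ⟨j, rfl⟩ := Nat.exists_eq_add_of_lt hk
  have hj : H (j + 1) = ⊤ := by
    rw [← hiter (j + 1) k, ← hsup, h]
    congr 2
    ring
  exact range_commutatorEnd_ne_top (top_le_iff.1 (hj ▸ map_iterate_succ_top_le_range _ j))
end

section
/- Let H be a finitely generated subgroup of rank r of a free group F and let g ∈ F be an element that depends on H. Then the kernel of φ_g : H ∗ ⟨x⟩ → F (the normal subgroup Eqn(H, g) of all equations over H satisfied by g) is the normal closure in H ∗ ⟨x⟩ of a finite set of r + 1 − s elements, where s = rank(⟨H, g⟩); in particular, ker φ_g is normally generated by at most r + 1 elements. -/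
open scoped Monoid.Coprod

variable {F : Type*}

/-!
Among the bases of a free group `G` of finite rank, choose one whose image under `φ : G → F` has
minimal total length, ties being broken by the initial halves of the reduced words. By Nielsen's
cancellation argument the nontrivial elements of this image are a free basis of the range of `φ`.
Hence `φ` is the projection killing the remaining basis elements followed by an injection, and these
killed elements, whose number is `rank G - rank (range φ)`, normally generate its kernel. For `φ_g`
the group `G` is `H ∗ ⟨x⟩`, of rank `r + 1`, and the range is `⟨H, g⟩`.
-/

open Cardinal
open FreeGroup hiding map_one map_mul

namespace Nielsen

section CommonPrefix

variable {β : Type*} [DecidableEq β]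

/-- The length of the longest common prefix of two lists. -/
def commonPrefixLength : List β → List β → ℕ
  | a :: l, b :: m => if a = b then commonPrefixLength l m + 1 else 0
  | _, _ => 0

theorem commonPrefixLength_comm (l m : List β) :
    commonPrefixLength l m = commonPrefixLength m l := by
  induction l generalizing m with
  | nil => cases m <;> simp [commonPrefixLength]
  | cons a l ih =>
    cases m with
    | nil => simp [commonPrefixLength]
    | cons b m => simp [commonPrefixLength, ih m, eq_comm]

theorem min_commonPrefixLength_le (l m n : List β) :
    min (commonPrefixLength l m) (commonPrefixLength m n) ≤ commonPrefixLength l n := by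
  induction l generalizing m n with
  | nil => simp [commonPrefixLength]
  | cons a l ih =>
    rcases m with _ | ⟨b, m⟩
    · simp [commonPrefixLength]
    rcases n with _ | ⟨c, n⟩
    · simp [commonPrefixLength]
    have := ih m n
    simp only [commonPrefixLength]
    grind

theorem exists_eq_append_commonPrefixLength (l m : List β) :
    ∃ p a b, l = p ++ a ∧ m = p ++ b ∧ p.length = commonPrefixLength l m ∧
      ∀ x ∈ a.head?, ∀ y ∈ b.head?, x ≠ y := by
  induction l generalizing m with
  | nil => exact ⟨[], [], m, by simp [commonPrefixLength]⟩
  | cons c l ih =>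
    rcases m with _ | ⟨d, m⟩
    · exact ⟨[], c :: l, [], by simp [commonPrefixLength]⟩
    by_cases h : c = d
    · obtain ⟨p, a, b, hl, hm, hp, hab⟩ := ih m
      exact ⟨c :: p, a, b, by simp [hl], by simp [hm, h], by simp [hp, h, commonPrefixLength], hab⟩
    · exact ⟨[], c :: l, d :: m, by simp [commonPrefixLength, h]⟩

end CommonPrefix

section WordCode

variable {β : Type*} [Fintype β]

/-- The number whose base `|β| + 2` digits, least significant first, are the letters of a word.
It serves to compare words of equal length by natural numbers, which can be summed over a
family. -/
noncomputable def wordCode (l : List β) : ℕ :=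
  Nat.ofDigits (Fintype.card β + 2) (l.map fun x => (Fintype.equivFin β x : ℕ))

theorem wordCode_append_lt_iff {p q : List β} (hpq : p.length = q.length) (t : List β) :
    wordCode (p ++ t) < wordCode (q ++ t) ↔ wordCode p < wordCode q := by
  simp [wordCode, Nat.ofDigits_append, hpq]

theorem eq_of_wordCode_eq {p q : List β} (hpq : p.length = q.length)
    (h : wordCode p = wordCode q) : p = q := by
  have hdigit (l : List β) :
      ∀ d ∈ l.map fun x => (Fintype.equivFin β x : ℕ), d < Fintype.card β + 2 := by
    simp only [List.mem_map, forall_exists_index, and_imp]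
    rintro _ x - rfl
    omega
  exact List.map_injective_iff.2 (Fin.val_injective.comp (Fintype.equivFin β).injective)
    (Nat.ofDigits_inj_of_len_eq (by omega) (by simpa using hpq) (hdigit p) (hdigit q) h)

end WordCode

section Cancellation

variable {α : Type*}

theorem isReduced_invRev {l : List (α × Bool)} (h : IsReduced l) : IsReduced (invRev l) := by
  classical
  rw [isReduced_iff_reduce_eq, reduce_invRev, h.reduce_eq]

theorem isReduced_invRev_append {a b : List (α × Bool)} (ha : IsReduced a) (hb : IsReduced b)
    (hab : ∀ x ∈ a.head?, ∀ y ∈ b.head?, x ≠ y) : IsReduced (invRev a ++ b) := by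
  refine List.IsChain.append (isReduced_invRev ha) hb fun u hu v hv huv => ?_
  rcases a with _ | ⟨⟨c, s⟩, a⟩
  · simp [invRev] at hu
  · obtain rfl : (c, !s) = u := by simpa [invRev] using hu
    have hne : (c, s) ≠ v := hab (c, s) rfl v hv
    grind

variable [DecidableEq α]

/-- The number of letters of `x` that are cancelled in the product of the reduced words of `x` and
`y`; this is the Gromov product of `x⁻¹` and `y` in the Cayley tree. -/
def cancellation (x y : FreeGroup α) : ℕ :=
  commonPrefixLength x⁻¹.toWord y.toWord

theorem cancellation_inv_inv (x y : FreeGroup α) : cancellation y⁻¹ x⁻¹ = cancellation x y := by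
  rw [cancellation, cancellation, inv_inv, commonPrefixLength_comm]

theorem min_cancellation_le (x y z : FreeGroup α) :
    min (cancellation x y) (cancellation y⁻¹ z) ≤ cancellation x z := by
  simpa only [cancellation, inv_inv] using min_commonPrefixLength_le x⁻¹.toWord y.toWord z.toWord

theorem exists_toWord_mul_eq (x y : FreeGroup α) :
    ∃ a p b, x.toWord = a ++ invRev p ∧ y.toWord = p ++ b ∧ (x * y).toWord = a ++ b ∧
      p.length = cancellation x y := by
  obtain ⟨p, a, b, hx, hy, hp, hab⟩ :=
    exists_eq_append_commonPrefixLength x⁻¹.toWord y.toWord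
  have hx' : x.toWord = invRev a ++ invRev p := by rw [← inv_inv x, toWord_inv, hx, invRev_append]
  refine ⟨invRev a, p, b, hx', hy, ?_, hp⟩
  have ha : IsReduced a := isReduced_toWord.infix (hx ▸ (List.suffix_append p a).isInfix)
  have hb : IsReduced b := isReduced_toWord.infix (hy ▸ (List.suffix_append p b).isInfix)
  have hmk : x * y = mk (invRev a ++ b) := by
    rw [← mk_toWord (x := x), ← mk_toWord (x := y), hx', hy, ← mul_mk, ← mul_mk, ← mul_mk,
      ← inv_mk (L := p)]
    group
  rw [hmk, toWord_mk, (isReduced_invRev_append ha hb hab).reduce_eq]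

theorem norm_mul_add (x y : FreeGroup α) :
    norm (x * y) + 2 * cancellation x y = norm x + norm y := by
  obtain ⟨a, p, b, hx, hy, hxy, hp⟩ := exists_toWord_mul_eq x y
  simp only [FreeGroup.norm, hx, hy, hxy, ← hp, List.length_append, invRev_length]
  ring

theorem cancellation_inv_mul_add (x y : FreeGroup α) :
    cancellation x⁻¹ (x * y) + cancellation x y = norm x := by
  have h₁ := norm_mul_add x⁻¹ (x * y)
  have h₂ := norm_mul_add x y
  rw [inv_mul_cancel_left, norm_inv_eq] at h₁
  omega

theorem cancellation_one_right (x : FreeGroup α) : cancellation x 1 = 0 := by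
  simpa using norm_mul_add x 1

theorem two_mul_cancellation_self_lt {x : FreeGroup α} (hx : x ≠ 1) :
    2 * cancellation x x < norm x := by
  by_contra! hle
  obtain ⟨a, p, b, hap, hpb, -, hp⟩ := exists_toWord_mul_eq x x
  have hlen : a.length + p.length = norm x := by
    rw [FreeGroup.norm, hap, List.length_append, invRev_length]
  obtain ⟨t, rfl⟩ : a <+: p := List.prefix_of_prefix_length_le (hap ▸ List.prefix_append _ _)
    (hpb ▸ List.prefix_append _ _) (by omega)
  -- Both halves of `x = a t⁻¹ a⁻¹` being cancelled, the middle `t` is its own inverse.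
  have ht : invRev t = t := by
    have h : a ++ (invRev t ++ invRev a) = a ++ (t ++ b) := by
      rw [← invRev_append, ← hap, hpb, List.append_assoc]
    exact List.append_inj_left (List.append_cancel_left h) invRev_length
  have ht1 : mk t = 1 := by
    have : mk t ^ 2 = 1 := by
      nth_rw 1 [pow_two, ← ht, ← inv_mk, inv_mul_cancel]
    exact (pow_eq_one_iff_left two_ne_zero).1 this
  apply hx
  rw [← mk_toWord (x := x), hap, ← mul_mk, ← inv_mk, ← mul_mk, ht1, mul_one, mul_inv_cancel]

end Cancellation

section Weight

variable {α : Type*} [DecidableEq α]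

/-- The initial half, rounded down, of the reduced word of `x`. -/
def initialHalf (x : FreeGroup α) : List (α × Bool) :=
  x.toWord.take (norm x / 2)

theorem length_initialHalf (x : FreeGroup α) : (initialHalf x).length = norm x / 2 := by
  rw [initialHalf, List.length_take]
  exact min_eq_left (Nat.div_le_self _ _)

theorem eq_one_of_initialHalf_eq {x : FreeGroup α} (hx : Even (norm x))
    (h : initialHalf x = initialHalf x⁻¹) : x = 1 := by
  obtain ⟨k, hk⟩ := hx
  have hlen : x.toWord.length = k + k := hk
  have hk2 : norm x / 2 = k := by omega
  have hdrop : x.toWord.drop k = invRev (x.toWord.take k) := by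
    rw [initialHalf, initialHalf, norm_inv_eq, hk2, toWord_inv] at h
    conv_rhs => rw [h]
    simp [invRev, List.take_reverse, hlen, Function.comp_def]
  rw [← mk_toWord (x := x), ← List.take_append_drop k x.toWord, hdrop, ← mul_mk, ← inv_mk,
    mul_inv_cancel]

theorem initialHalf_eq_of_toWord_eq {x : FreeGroup α} {p q : List (α × Bool)}
    (hx : x.toWord = p ++ q) (hpq : p.length ≤ q.length) :
    initialHalf x = p ++ q.take ((q.length - p.length) / 2) := by
  have hn : norm x = p.length + q.length := by rw [FreeGroup.norm, hx, List.length_append]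
  rw [initialHalf, hx, List.take_append, List.take_of_length_le (by omega),
    show norm x / 2 - p.length = (q.length - p.length) / 2 by omega]

theorem initialHalf_inv_eq_of_toWord_eq {x : FreeGroup α} {p q : List (α × Bool)}
    (hx : x.toWord = p ++ q) (hpq : p.length ≤ q.length) :
    initialHalf x⁻¹ = (invRev q).take ((p.length + q.length) / 2) := by
  have hn : norm x = p.length + q.length := by rw [FreeGroup.norm, hx, List.length_append]
  rw [initialHalf, toWord_inv, norm_inv_eq, hx, hn, invRev_append,
    List.take_append_of_le_length (by rw [invRev_length]; omega)]

variable [Fintype α]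

/-- The sum of the codes of the initial halves of `x` and `x⁻¹`, which breaks ties between elements
of equal length in Nielsen's argument. -/
noncomputable def halfCode (x : FreeGroup α) : ℕ :=
  wordCode (initialHalf x) + wordCode (initialHalf x⁻¹)

theorem halfCode_inv (x : FreeGroup α) : halfCode x⁻¹ = halfCode x := by
  rw [halfCode, halfCode, inv_inv, add_comm]

theorem halfCode_mul_lt {x y : FreeGroup α} (hxy : 2 * cancellation x y = norm x)
    (hle : norm x ≤ norm y) (hlt : wordCode (initialHalf x) < wordCode (initialHalf x⁻¹)) :
    halfCode (x * y) < halfCode y := by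
  obtain ⟨a, p, b, hx, hy, hmul, hp⟩ := exists_toWord_mul_eq x y
  have hnx : norm x = a.length + p.length := by
    rw [FreeGroup.norm, hx, List.length_append, invRev_length]
  have hny : norm y = p.length + b.length := by rw [FreeGroup.norm, hy, List.length_append]
  have hap : a.length = p.length := by omega
  have hpb : p.length ≤ b.length := by omega
  have hx_half : initialHalf x = a := by
    simpa [hap] using initialHalf_eq_of_toWord_eq hx (by rw [invRev_length, hap])
  have hx_inv_half : initialHalf x⁻¹ = p := by
    simpa [hap, ← two_mul] using
      initialHalf_inv_eq_of_toWord_eq hx (by rw [invRev_length, hap])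
  have hinv : initialHalf (x * y)⁻¹ = initialHalf y⁻¹ := by
    rw [initialHalf_inv_eq_of_toWord_eq hmul (by omega), initialHalf_inv_eq_of_toWord_eq hy hpb,
      hap]
  rw [halfCode, halfCode, hinv, initialHalf_eq_of_toWord_eq hmul (by omega),
    initialHalf_eq_of_toWord_eq hy hpb, hap, Nat.add_lt_add_iff_right, wordCode_append_lt_iff hap]
  rwa [hx_half, hx_inv_half] at hlt

/-- The quantity that is decreased by Nielsen's reduction process: the length of the reduced word,
refined by `halfCode`. -/
noncomputable def nielsenWeight (x : FreeGroup α) : ℕ ×ₗ ℕ :=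
  toLex (norm x, halfCode x)

theorem nielsenWeight_inv (x : FreeGroup α) : nielsenWeight x⁻¹ = nielsenWeight x := by
  rw [nielsenWeight, nielsenWeight, norm_inv_eq, halfCode_inv]

theorem nielsenWeight_le_iff {x y : FreeGroup α} : nielsenWeight x ≤ nielsenWeight y ↔
    norm x < norm y ∨ norm x = norm y ∧ halfCode x ≤ halfCode y := by
  simp [nielsenWeight, Prod.Lex.le_iff]

theorem nielsenWeight_le_mul_self (x : FreeGroup α) :
    nielsenWeight x ≤ nielsenWeight (x * x) := by
  rcases eq_or_ne x 1 with rfl | hx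
  · rw [one_mul]
  · have := norm_mul_add x x
    have := two_mul_cancellation_self_lt hx
    exact nielsenWeight_le_iff.2 (Or.inl (by omega))

theorem two_mul_cancellation_le_left {x y : FreeGroup α}
    (h : nielsenWeight y ≤ nielsenWeight (x * y)) : 2 * cancellation x y ≤ norm x := by
  have := norm_mul_add x y
  rw [nielsenWeight_le_iff] at h
  omega

theorem two_mul_cancellation_le_right {x y : FreeGroup α}
    (h : nielsenWeight x ≤ nielsenWeight (x * y)) : 2 * cancellation x y ≤ norm y := by
  rw [← nielsenWeight_inv x, ← nielsenWeight_inv (x * y), mul_inv_rev] at h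
  simpa only [cancellation_inv_inv, norm_inv_eq] using two_mul_cancellation_le_left h

theorem wordCode_initialHalf_inv_le {x y : FreeGroup α}
    (h : nielsenWeight y ≤ nielsenWeight (x * y)) (hxy : 2 * cancellation x y = norm x)
    (hle : norm x ≤ norm y) :
    wordCode (initialHalf x⁻¹) ≤ wordCode (initialHalf x) := by
  by_contra! hlt
  have := norm_mul_add x y
  have := halfCode_mul_lt hxy hle hlt
  rw [nielsenWeight_le_iff] at h
  omega

theorem cancellation_add_cancellation_lt {x y z : FreeGroup α} (hy : y ≠ 1)
    (hx : nielsenWeight x ≤ nielsenWeight (x * y)) (hxy : nielsenWeight y ≤ nielsenWeight (x * y))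
    (hyz : nielsenWeight y ≤ nielsenWeight (y * z)) (hz : nielsenWeight z ≤ nielsenWeight (y * z)) :
    cancellation x y + cancellation y z < norm y := by
  have hx_norm := two_mul_cancellation_le_left hxy
  have hxy_norm := two_mul_cancellation_le_right hx
  have hyz_norm := two_mul_cancellation_le_left hz
  have hz_norm := two_mul_cancellation_le_right hyz
  by_contra! hge
  -- Both halves of `y` are cancelled, so minimality of the weight compares them in both directions.
  have hle : wordCode (initialHalf y⁻¹) ≤ wordCode (initialHalf y) :=
    wordCode_initialHalf_inv_le hz (by omega) (by omega)
  have hle_inv : wordCode (initialHalf y) ≤ wordCode (initialHalf y⁻¹) := by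
    rw [← nielsenWeight_inv x, ← nielsenWeight_inv (x * y), mul_inv_rev] at hx
    simpa only [inv_inv] using wordCode_initialHalf_inv_le hx
      (by rw [cancellation_inv_inv, norm_inv_eq]; omega) (by rw [norm_inv_eq, norm_inv_eq]; omega)
  refine hy (eq_one_of_initialHalf_eq ⟨cancellation x y, by omega⟩
    (eq_of_wordCode_eq ?_ (hle_inv.antisymm hle)))
  rw [length_initialHalf, length_initialHalf, norm_inv_eq]

end Weight

section Letter

variable {ι G G' : Type*} [Group G] [Group G']

/-- The value `w i` or `(w i)⁻¹` at a letter of a word in the generators `ι`. -/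
def letter (w : ι → G) (a : ι × Bool) : G :=
  cond a.2 (w a.1) (w a.1)⁻¹

theorem letter_not (w : ι → G) (a : ι × Bool) : letter w (a.1, !a.2) = (letter w a)⁻¹ := by
  rcases a with ⟨i, _ | _⟩ <;> simp [letter]

theorem letter_ne_one {w : ι → G} (hw : ∀ i, w i ≠ 1) (a : ι × Bool) : letter w a ≠ 1 := by
  rcases a with ⟨i, _ | _⟩ <;> simpa [letter] using hw i

theorem map_letter (φ : G →* G') (w : ι → G) (a : ι × Bool) :
    φ (letter w a) = letter (φ ∘ w) a := by
  rcases a with ⟨i, _ | _⟩ <;> simp [letter]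

theorem lift_eq_prod_letter [DecidableEq ι] (w : ι → G) (x : FreeGroup ι) :
    FreeGroup.lift w x = (x.toWord.map (letter w)).prod := by
  conv_lhs => rw [← mk_toWord (x := x), lift_mk]
  rfl

end Letter

section NielsenReduced

variable {ι α : Type*} [DecidableEq α]

/-- A family in a free group is Nielsen reduced if cancellation between adjacent letters of a
reduced word in the family never exceeds half of the left letter, and cancellation on both sides
never exhausts the letter in the middle. -/
structure IsNielsenReduced (w : ι → FreeGroup α) : Prop where
  ne_one (i : ι) : w i ≠ 1
  two_mul_cancellation_le (a b : ι × Bool) (hab : a.1 = b.1 → a.2 = b.2) :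
    2 * cancellation (letter w a) (letter w b) ≤ norm (letter w a)
  cancellation_add_lt (a b c : ι × Bool) (hab : a.1 = b.1 → a.2 = b.2)
    (hbc : b.1 = c.1 → b.2 = c.2) :
    cancellation (letter w a) (letter w b) + cancellation (letter w b) (letter w c) <
      norm (letter w b)

namespace IsNielsenReduced

variable {w : ι → FreeGroup α}

theorem cancellation_prod (hw : IsNielsenReduced w) {a b : ι × Bool} {L : List (ι × Bool)}
    (h : IsReduced (a :: b :: L)) :
    cancellation (letter w a) ((b :: L).map (letter w)).prod =
      cancellation (letter w a) (letter w b) := by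
  induction L generalizing a b with
  | nil => simp
  | cons c L ih =>
    have hab := (isReduced_cons_cons.1 h).1
    have hbcL := (isReduced_cons_cons.1 h).2
    have hlt := hw.cancellation_add_lt a b c hab (isReduced_cons_cons.1 hbcL).1
    have hih := ih hbcL
    rw [List.map_cons, List.prod_cons]
    set x := letter w a
    set y := letter w b
    set z := ((c :: L).map (letter w)).prod
    -- Since `y * z` begins with more letters of `y` than `x` cancels, `x` cannot tell them apart.
    have hyz : cancellation y⁻¹ (y * z) + cancellation y z = norm y := cancellation_inv_mul_add y z
    have hcomm : cancellation (y * z)⁻¹ y = cancellation y⁻¹ (y * z) := by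
      simpa only [inv_inv] using cancellation_inv_inv y⁻¹ (y * z)
    have hle := min_cancellation_le x y (y * z)
    have hge := min_cancellation_le x (y * z) y
    omega

theorem lift_injective (hw : IsNielsenReduced w) : Function.Injective (FreeGroup.lift w) := by
  classical
  rw [injective_iff_map_eq_one]
  intro x hx
  have hred : IsReduced x.toWord := isReduced_toWord
  rw [lift_eq_prod_letter] at hx
  rcases hL : x.toWord with _ | ⟨a, _ | ⟨b, L⟩⟩
  · exact toWord_eq_nil_iff.1 hL
  · rw [hL, List.map_singleton, List.prod_singleton] at hx
    exact absurd hx (letter_ne_one hw.ne_one a)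
  · rw [hL] at hred hx
    rw [List.map_cons, List.prod_cons] at hx
    have hpos : 0 < norm (letter w a) :=
      Nat.pos_of_ne_zero fun h => letter_ne_one hw.ne_one a (norm_eq_zero.1 h)
    have hle := hw.two_mul_cancellation_le a b (isReduced_cons_cons.1 hred).1
    have hcancel := cancellation_inv_mul_add (letter w a) ((b :: L).map (letter w)).prod
    rw [hx, cancellation_one_right, hw.cancellation_prod hred] at hcancel
    omega

end IsNielsenReduced

theorem isNielsenReduced_of_nielsenWeight_le [Fintype α] {w : ι → FreeGroup α}
    (hone : ∀ i, w i ≠ 1)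
    (hmin : ∀ a b : ι × Bool, a.1 ≠ b.1 →
      nielsenWeight (letter w b) ≤ nielsenWeight (letter w a * letter w b)) :
    IsNielsenReduced w := by
  have hright (a b : ι × Bool) (hab : a.1 = b.1 → a.2 = b.2) :
      nielsenWeight (letter w b) ≤ nielsenWeight (letter w a * letter w b) := by
    by_cases h : a.1 = b.1
    · rw [show b = a from (Prod.ext h (hab h)).symm]
      exact nielsenWeight_le_mul_self _
    · exact hmin a b h
  have hleft (a b : ι × Bool) (hab : a.1 = b.1 → a.2 = b.2) :
      nielsenWeight (letter w a) ≤ nielsenWeight (letter w a * letter w b) := by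
    have := hright (b.1, !b.2) (a.1, !a.2) fun h => by rw [hab h.symm]
    rwa [letter_not, letter_not, ← mul_inv_rev, nielsenWeight_inv, nielsenWeight_inv] at this
  exact ⟨hone, fun a b hab => two_mul_cancellation_le_left (hright a b hab),
    fun a b c hab hbc => cancellation_add_cancellation_lt (letter_ne_one hone b) (hleft a b hab)
      (hright a b hab) (hleft b c hbc) (hright b c hbc)⟩

end NielsenReduced

section Basis

variable {ι G : Type*} [Group G]

theorem basis_lift_apply {K : Type*} [Group K] (b : FreeGroupBasis ι G) (f : ι → K) (i : ι) :
    b.lift f (b i) = f i := by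
  simp

theorem closure_range_basis (b : FreeGroupBasis ι G) : Subgroup.closure (Set.range b) = ⊤ := by
  have h : ⇑b = b.repr.symm.toMonoidHom ∘ FreeGroup.of := rfl
  rw [h, Set.range_comp, ← MonoidHom.map_closure, closure_range_of,
    Subgroup.map_top_of_surjective _ b.repr.symm.surjective]

theorem exists_basis_eq_update [DecidableEq ι] (b : FreeGroupBasis ι G) (j : ι) {u v : G}
    (hu : u ∈ Subgroup.closure (b '' {j}ᶜ)) (hv : v ∈ Subgroup.closure (b '' {j}ᶜ)) :
    ∃ b' : FreeGroupBasis ι G, ⇑b' = Function.update b j (u * b j * v) := by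
  let θ (z : G) : G →* G := b.lift (Function.update b j z)
  have hθ (z : G) (k : ι) : θ z (b k) = Function.update b j z k := basis_lift_apply b _ k
  have hfix (z : G) {y : G} (hy : y ∈ Subgroup.closure (b '' {j}ᶜ)) : θ z y = y := by
    suffices Set.EqOn (θ z) (MonoidHom.id G) (b '' {j}ᶜ) from
      MonoidHom.eqOn_closure this hy
    rintro _ ⟨k, hk, rfl⟩
    simpa [hθ] using Function.update_of_ne hk _ _
  let e : G ≃* G := MonoidHom.toMulEquiv (θ (u * b j * v)) (θ (u⁻¹ * b j * v⁻¹))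
    (b.ext_hom _ _ fun k => by
      by_cases h : k = j
      · subst h
        simp [hθ, hfix _ hu, hfix _ hv, mul_assoc]
      · simp [hθ, h])
    (b.ext_hom _ _ fun k => by
      by_cases h : k = j
      · subst h
        simp [hθ, hfix _ hu, hfix _ hv, mul_assoc]
      · simp [hθ, h])
  refine ⟨b.map e, ?_⟩
  ext k
  exact hθ _ k

theorem exists_basis_letter_eq_mul (b : FreeGroupBasis ι G) {a c : ι × Bool} (hac : a.1 ≠ c.1) :
    ∃ b' : FreeGroupBasis ι G, letter b' c = letter b a * letter b c ∧ ∀ k ≠ c.1, b' k = b k := by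
  classical
  have ha : letter b a ∈ Subgroup.closure (b '' {c.1}ᶜ) := by
    have : b a.1 ∈ Subgroup.closure (b '' {c.1}ᶜ) :=
      Subgroup.subset_closure (Set.mem_image_of_mem b hac)
    rcases a with ⟨i, _ | _⟩
    · exact inv_mem this
    · exact this
  rcases c with ⟨j, _ | _⟩
  · obtain ⟨b', hb'⟩ := exists_basis_eq_update b j (one_mem _) (inv_mem ha)
    exact ⟨b', by simp [letter, hb'], fun k hk => by rw [hb', Function.update_of_ne hk]⟩
  · obtain ⟨b', hb'⟩ := exists_basis_eq_update b j ha (one_mem _)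
    exact ⟨b', by simp [letter, hb'], fun k hk => by rw [hb', Function.update_of_ne hk]⟩

/-- The free product of two free groups is free on the disjoint union of their bases. -/
noncomputable def coprodBasis {κ H : Type*} [Group H] (b : FreeGroupBasis ι G)
    (c : FreeGroupBasis κ H) : FreeGroupBasis (ι ⊕ κ) (G ∗ H) :=
  .ofRepr <| MonoidHom.toMulEquiv
    (Monoid.Coprod.lift (b.lift (FreeGroup.of ∘ Sum.inl)) (c.lift (FreeGroup.of ∘ Sum.inr)))
    (FreeGroup.lift (Sum.elim (Monoid.Coprod.inl ∘ b) (Monoid.Coprod.inr ∘ c)))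
    (Monoid.Coprod.hom_ext (b.ext_hom _ _ fun i => by simp) (c.ext_hom _ _ fun k => by simp))
    (by ext (i | k) <;> simp)

end Basis

section MinimalBasis

variable {ι α G : Type*} [Group G]

theorem nielsenWeight_letter [DecidableEq α] [Fintype α] (w : ι → FreeGroup α) (a : ι × Bool) :
    nielsenWeight (letter w a) = nielsenWeight (w a.1) := by
  rcases a with ⟨i, _ | _⟩ <;> simp [letter, nielsenWeight_inv]

theorem exists_basis_nielsenWeight_le [Finite ι] [DecidableEq α] [Fintype α]
    (b : FreeGroupBasis ι G) (φ : G →* FreeGroup α) :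
    ∃ b' : FreeGroupBasis ι G, ∀ a c : ι × Bool, a.1 ≠ c.1 →
      nielsenWeight (letter (φ ∘ b') c) ≤
        nielsenWeight (letter (φ ∘ b') a * letter (φ ∘ b') c) := by
  have := Fintype.ofFinite ι
  have : Nonempty (FreeGroupBasis ι G) := ⟨b⟩
  let f (b : FreeGroupBasis ι G) : ℕ ×ₗ ℕ := ∑ i, nielsenWeight (φ (b i))
  refine ⟨Function.argmin f, fun a c hac => ?_⟩
  by_contra! hlt
  set b' := Function.argmin f
  obtain ⟨b'', hc, hk⟩ := exists_basis_letter_eq_mul b' hac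
  rw [← map_letter, ← map_letter, ← map_mul, ← hc, map_letter, map_letter,
    nielsenWeight_letter, nielsenWeight_letter] at hlt
  refine Function.not_lt_argmin f b'' (Finset.sum_lt_sum (fun k _ => ?_)
    ⟨c.1, Finset.mem_univ _, hlt⟩)
  rcases eq_or_ne k c.1 with rfl | hkc
  · exact hlt.le
  · rw [hk k hkc]

theorem exists_basis_lift_injective [Finite ι] [Finite α] (b : FreeGroupBasis ι G)
    (φ : G →* FreeGroup α) :
    ∃ b' : FreeGroupBasis ι G,
      Function.Injective (FreeGroup.lift fun i : {i // φ (b' i) ≠ 1} => φ (b' i)) := by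
  classical
  have := Fintype.ofFinite α
  obtain ⟨b', hb'⟩ := exists_basis_nielsenWeight_le b φ
  have hred : IsNielsenReduced fun i : {i // φ (b' i) ≠ 1} => φ (b' i) :=
    isNielsenReduced_of_nielsenWeight_le (fun i => i.2) fun a c hac =>
      hb' (a.1, a.2) (c.1, c.2) fun h => hac (Subtype.ext h)
  exact ⟨b', hred.lift_injective⟩

end MinimalBasis

section Kernel

variable {ι α G K : Type*} [Group G] [Group K]

open scoped Classical in
/-- The homomorphism onto the free group on the indices in `s` that kills the other elements of
the basis. -/
noncomputable def basisProjection (b : FreeGroupBasis ι G) (s : Set ι) : G →* FreeGroup s :=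
  b.lift fun i => if h : i ∈ s then FreeGroup.of ⟨i, h⟩ else 1

variable (b : FreeGroupBasis ι G) (s : Set ι)

theorem lift_comp_basisProjection {φ : G →* K} (hφ : ∀ i ∉ s, φ (b i) = 1) :
    (FreeGroup.lift fun i : s => φ (b i)).comp (basisProjection b s) = φ := by
  refine b.ext_hom _ _ fun i => ?_
  rw [MonoidHom.comp_apply, basisProjection, basis_lift_apply]
  split_ifs with h
  · rw [lift_apply_of]
  · rw [map_one, hφ i h]

theorem ker_basisProjection :
    (basisProjection b s).ker = Subgroup.normalClosure (b '' sᶜ) := by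
  apply le_antisymm
  · have hquot := lift_comp_basisProjection b s
      (φ := QuotientGroup.mk' (Subgroup.normalClosure (b '' sᶜ)))
      fun i hi => (QuotientGroup.eq_one_iff _).2
        (Subgroup.subset_normalClosure (Set.mem_image_of_mem b hi))
    intro x hx
    rw [← QuotientGroup.ker_mk' (Subgroup.normalClosure (b '' sᶜ)), MonoidHom.mem_ker, ← hquot,
      MonoidHom.comp_apply, MonoidHom.mem_ker.1 hx, map_one]
  · refine Subgroup.normalClosure_le_normal ?_
    rintro _ ⟨i, hi, rfl⟩
    exact (basis_lift_apply b _ i).trans (dif_neg hi)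

theorem ker_eq_normalClosure_image_compl {φ : G →* K} (hφ : ∀ i ∉ s, φ (b i) = 1)
    (hinj : Function.Injective (FreeGroup.lift fun i : s => φ (b i))) :
    φ.ker = Subgroup.normalClosure (b '' sᶜ) := by
  rw [← ker_basisProjection, ← MonoidHom.ker_comp_of_injective _ _ hinj,
    lift_comp_basisProjection b s hφ]

theorem exists_finset_normalClosure_eq_ker [Finite ι] [Finite α] (b : FreeGroupBasis ι G)
    {φ : G →* FreeGroup α} (hφ : Function.Surjective φ) :
    ∃ T : Finset G, T.card + Nat.card α = Nat.card ι ∧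
      Subgroup.normalClosure (T : Set G) = φ.ker := by
  obtain ⟨b, hinj⟩ := exists_basis_lift_injective b φ
  let s : Set ι := {i | φ (b i) ≠ 1}
  have hone (i : ι) (hi : i ∉ s) : φ (b i) = 1 := not_not.1 hi
  have hsurj : Function.Surjective (FreeGroup.lift fun i : s => φ (b i)) := by
    rw [← lift_comp_basisProjection b s hone, MonoidHom.coe_comp] at hφ
    exact hφ.of_comp
  have hcard : Nat.card s = Nat.card α :=
    Nat.card_congr (Equiv.ofFreeGroupEquiv (MulEquiv.ofBijective _ ⟨hinj, hsurj⟩))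
  have hfin : (b '' sᶜ).Finite := Set.toFinite _
  refine ⟨hfin.toFinset, ?_, ?_⟩
  · rw [← Set.ncard_eq_toFinset_card _ hfin, Set.ncard_image_of_injective _ b.injective, ← hcard,
      add_comm]
    exact s.ncard_add_ncard_compl
  · rw [hfin.coe_toFinset, ker_eq_normalClosure_image_compl b s hone hinj]

end Kernel

section Rank

universe u

theorem mk_le_of_closure_eq_top {ι G : Type u} [Group G] (b : FreeGroupBasis ι G) {S : Set G}
    (hS : Subgroup.closure S = ⊤) : #ι ≤ #S := by
  let θ : G →* Multiplicative (ι →₀ ℤ) :=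
    b.lift fun i => Multiplicative.ofAdd (Finsupp.single i 1)
  have hθ (i : ι) : (θ (b i)).toAdd = Finsupp.single i 1 := by
    rw [basis_lift_apply, toAdd_ofAdd]
  let f (x : S) : ι →₀ ℤ := (θ x).toAdd
  have hmem (x : G) : (θ x).toAdd ∈ Submodule.span ℤ (Set.range f) := by
    have hx : x ∈ Subgroup.closure S := hS ▸ Subgroup.mem_top x
    induction hx using Subgroup.closure_induction with
    | mem x hx => exact Submodule.subset_span ⟨⟨x, hx⟩, rfl⟩
    | one => simp
    | mul x y _ _ hx hy => simpa using add_mem hx hy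
    | inv x _ hx => simpa using neg_mem hx
  have hspan : Submodule.span ℤ (Set.range f) = ⊤ := by
    rw [eq_top_iff, ← Finsupp.basisSingleOne.span_eq, Submodule.span_le]
    rintro _ ⟨i, rfl⟩
    simpa [hθ] using hmem (b i)
  calc #ι = #(Set.range (Finsupp.basisSingleOne (R := ℤ) (ι := ι))) :=
        (mk_range_eq _ Finsupp.basisSingleOne.injective).symm
    _ ≤ #(Set.range f) := Finsupp.basisSingleOne.le_span hspan
    _ ≤ #S := mk_range_le

theorem rk_eq_mk_of_basis {ι F : Type u} [Group F] {K : Subgroup F} (b : FreeGroupBasis ι K) :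
    rk K = #ι := by
  apply le_antisymm
  · have hclosure : Subgroup.closure (Set.range fun i => (b i : F)) = K := by
      change Subgroup.closure (Set.range (K.subtype ∘ b)) = K
      rw [Set.range_comp, ← MonoidHom.map_closure, closure_range_basis,
        ← MonoidHom.range_eq_map, Subgroup.range_subtype]
    exact (ciInf_le' (fun S : {S : Set F // Subgroup.closure S = K} => #S.1)
      ⟨_, hclosure⟩).trans mk_range_le
  · have : Nonempty {S : Set F // Subgroup.closure S = K} := ⟨⟨K, K.closure_eq⟩⟩
    refine le_ciInf fun ⟨S, hS⟩ => ?_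
    subst hS
    calc #ι ≤ #((↑) ⁻¹' S : Set (Subgroup.closure S)) :=
          mk_le_of_closure_eq_top b Subgroup.closure_closure_coe_preimage
      _ ≤ #S := mk_preimage_of_injective _ _ Subtype.val_injective

theorem nonempty_basis_of_rk_eq [Group F] [IsFreeGroup F] {K : Subgroup F} {n : ℕ}
    (hK : rk K = n) : Nonempty (FreeGroupBasis (Fin n) K) := by
  rw [rk_eq_mk_of_basis (IsFreeGroup.basis K), mk_eq_nat_iff] at hK
  exact hK.map (IsFreeGroup.basis K).reindex

end Rank

end Nielsen

open Nielsen

theorem range_phi [Group F] (H : Subgroup F) (g : F) :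
    (phi H g).range = H ⊔ Subgroup.closure {g} := by
  rw [phi, Monoid.Coprod.range_lift, range_lift_eq_closure, Subgroup.range_subtype,
    Set.range_const]

theorem ker_phi_normally_finitely_generated_general {ι G F : Type*} [Group G] [Group F]
    [IsFreeGroup F] [Finite ι] (b : FreeGroupBasis ι G) (φ : G →* F) :
    ∃ T : Finset G, T.card + rk φ.range = Nat.card ι ∧
      Subgroup.normalClosure (T : Set G) = φ.ker := by
  let c := IsFreeGroup.basis φ.range
  have hclosure : Subgroup.closure (Set.range (φ.rangeRestrict ∘ b)) = ⊤ := by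
    rw [Set.range_comp, ← MonoidHom.map_closure, closure_range_basis,
      Subgroup.map_top_of_surjective _ φ.rangeRestrict_surjective]
  have : Finite (IsFreeGroup.Generators φ.range) := mk_lt_aleph0_iff.1
    ((mk_le_of_closure_eq_top c hclosure).trans_lt (Set.finite_range _).lt_aleph0)
  obtain ⟨T, hcard, hT⟩ := exists_finset_normalClosure_eq_ker b
    (φ := c.repr.toMonoidHom.comp φ.rangeRestrict)
    (c.repr.surjective.comp φ.rangeRestrict_surjective)
  rw [MonoidHom.ker_comp_of_injective _ _ c.repr.injective, φ.ker_rangeRestrict] at hT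
  refine ⟨T, ?_, hT⟩
  rw [rk_eq_mk_of_basis c, ← Nat.cast_card]
  exact_mod_cast hcard

/-- if `H` has rank `r`, `g` depends on `H`, and `s = rank ⟨H, g⟩`, then
`ker φ_g = Eqn(H, g)` is the normal closure in `H ∗ ⟨x⟩` of a set of `r + 1 - s`
elements (in particular, of at most `r + 1` elements). -/
theorem ker_phi_normally_finitely_generated [Group F] [IsFreeGroup F]
    (H : Subgroup F) (r s : ℕ) (hH : H.FG) (hr : rk H = r)
    (g : F) (hg : Depends H g) (hs : rk (H ⊔ Subgroup.closure {g}) = s) :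
    ∃ T : Finset (↥H ∗ FreeGroup Unit),
      T.card = r + 1 - s ∧
      Subgroup.normalClosure (T : Set (↥H ∗ FreeGroup Unit)) = (phi H g).ker := by
  obtain ⟨b⟩ := nonempty_basis_of_rk_eq hr
  obtain ⟨T, hcard, hT⟩ := ker_phi_normally_finitely_generated_general
    (coprodBasis b (FreeGroupBasis.ofFreeGroup Unit)) (phi H g)
  refine ⟨T, Nat.eq_sub_of_add_eq ?_, hT⟩
  simpa [range_phi, hs, ← Nat.cast_add] using hcard
end
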